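/- The divide-and-choose algorithm for 3 agents is a 3/2-approximation of maxmin share fairness: suppose the items are indexed 1,…,m so that agent 1's costs satisfy c_{1,1} ≥ c_{1,2} ≥ … ≥ c_{1,m}, and define the bundles S_1 = {1}, S_2 = {j : j even}, S_3 = {j : j odd, j ≥ 3}. Let agent 2 receive a bundle of minimum c_2-cost among S_1, S_2, S_3; let agent 3 receive a bundle of minimum c_3-cost among the two remaining bundles; and let agent 1 receive the last remaining bundle. Then the resulting allocation satisfies c_i(X_i) ≤ (3/2)·MMS_i for every agent i ∈ {1,2,3}. -/

import Mathlib

/-- The maxmin share of an agent with cost vector `c` over `m` items,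
with respect to partitions into `n` (possibly empty) bundles. -/
noncomputable def MMS (n m : ℕ) (c : Fin m → ℝ) : ℝ :=
  ⨅ P : Fin m → Fin n, ⨆ k : Fin n, ∑ j ∈ Finset.univ.filter (fun j => P j = k), c j

/-- The total cost is at most `n` times the maxmin share. -/
theorem sum_le_mul_MMS (n m : ℕ) [NeZero n] (c : Fin m → ℝ) :
    ∑ j, c j ≤ n * MMS n m c := by
  have hn : (0 : ℝ) < n := Nat.cast_pos.2 (NeZero.pos n)
  rw [← div_le_iff₀' hn]
  refine le_ciInf fun P => ?_
  rw [div_le_iff₀' hn, ← Finset.sum_fiberwise Finset.univ P c]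
  calc _ ≤ ∑ _k : Fin n, ⨆ k : Fin n, ∑ j ∈ Finset.univ.filter (fun j => P j = k), c j :=
        Finset.sum_le_sum fun k _ => le_ciSup (f := fun k : Fin n =>
          ∑ j ∈ Finset.univ.filter (fun j => P j = k), c j) (Set.finite_range _).bddAbove k
    _ = _ := by simp

/-- Every single item costs at most the maxmin share. -/
theorem le_MMS {n m : ℕ} [NeZero n] {c : Fin m → ℝ} (hc : ∀ j, 0 ≤ c j) (j : Fin m) :
    c j ≤ MMS n m c := by
  refine le_ciInf fun P => ?_
  calc c j ≤ ∑ j' ∈ Finset.univ.filter (fun j' => P j' = P j), c j' :=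
        Finset.single_le_sum (fun j' _ => hc j') (by simp)
    _ ≤ _ := le_ciSup (f := fun k : Fin n =>
          ∑ j ∈ Finset.univ.filter (fun j => P j = k), c j) (Set.finite_range _).bddAbove (P j)

/-- If costs are nonincreasing and `s` contains neither position `0` nor two consecutive
positions, then `s` carries at most half of the total cost. -/
theorem two_mul_sum_le_sum_of_alternating {m : ℕ} {c : Fin m → ℝ} (hc : ∀ j, 0 ≤ c j)
    (hsorted : ∀ j j' : Fin m, j ≤ j' → c j' ≤ c j) (s : Finset (Fin m))
    (hs : ∀ j ∈ s, ∀ j' ∈ s, (j : ℕ) ≠ j' + 1) (hs0 : ∀ j ∈ s, (j : ℕ) ≠ 0) :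
    2 * ∑ j ∈ s, c j ≤ ∑ j, c j := by
  let f : Fin m → Fin m := fun j => ⟨j - 1, by omega⟩
  have hinj : Set.InjOn f s := by
    intro a ha b hb hab
    have h1 := hs0 a ha
    have h2 := hs0 b hb
    simp only [f, Fin.mk.injEq] at hab
    exact Fin.ext (by omega)
  have hdisj : Disjoint s (s.image f) := by
    rw [Finset.disjoint_right]
    intro a ha ha'
    obtain ⟨b, hb, rfl⟩ := Finset.mem_image.1 ha
    have h1 := hs b hb _ ha'
    have h2 := hs0 b hb
    simp only [f] at h1
    omega
  have hle : ∑ j ∈ s, c j ≤ ∑ j ∈ s.image f, c j := by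
    rw [Finset.sum_image hinj]
    exact Finset.sum_le_sum fun j _ => hsorted _ _ (Fin.le_def.2 (Nat.sub_le _ _))
  have hunion : ∑ j ∈ s, c j + ∑ j ∈ s.image f, c j ≤ ∑ j, c j := by
    rw [← Finset.sum_union hdisj]
    exact Finset.sum_le_sum_of_subset_of_nonneg (Finset.subset_univ _) fun j _ _ => hc j
  linarith

/-- the divide-and-choose algorithm for 3 agents is a
3/2-approximation of MMS fairness.  Items `0,…,m-1` are sorted so that agent 0
(the divider, "agent 1" in the paper) has `c 0 0 ≥ c 0 1 ≥ …`.  The bundles are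
`B 0 = {0}` (the single largest item), `B 1` = items in odd positions (the
2nd, 4th, … largest), `B 2` = items in even positions `≥ 2` (the 3rd, 5th, …
largest).  `π` assigns bundles to agents: agent 1 ("agent 2") chooses first a
cheapest bundle for her, agent 2 ("agent 3") chooses a cheapest remaining
bundle, and agent 0 receives the last one.  Each agent `i`'s cost is at most
`(3/2)·MMS_i`. -/
theorem divideAndChoose_approx (m : ℕ) (hm : 0 < m)
    (c : Fin 3 → Fin m → ℝ) (hc : ∀ i j, 0 ≤ c i j)
    (hsorted : ∀ j j' : Fin m, j ≤ j' → c 0 j' ≤ c 0 j)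
    (B : Fin 3 → Finset (Fin m))
    (hB0 : B 0 = {(⟨0, hm⟩ : Fin m)})
    (hB1 : B 1 = Finset.univ.filter (fun j : Fin m => (j : ℕ) % 2 = 1))
    (hB2 : B 2 = Finset.univ.filter (fun j : Fin m => (j : ℕ) % 2 = 0 ∧ 2 ≤ (j : ℕ)))
    (π : Equiv.Perm (Fin 3))
    (hchoose1 : ∀ k : Fin 3, ∑ j ∈ B (π 1), c 1 j ≤ ∑ j ∈ B k, c 1 j)
    (hchoose2 : ∀ k : Fin 3, k ≠ π 1 → ∑ j ∈ B (π 2), c 2 j ≤ ∑ j ∈ B k, c 2 j) :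
    ∀ i : Fin 3, ∑ j ∈ B (π i), c i j ≤ (3 / 2 : ℝ) * MMS 3 m (c i) := by
  have hsum (i : Fin 3) :
      ∑ j ∈ B 0, c i j + ∑ j ∈ B 1, c i j + ∑ j ∈ B 2, c i j = ∑ j, c i j := by
    have hB0' : B 0 = Finset.univ.filter (fun j : Fin m => (j : ℕ) = 0) := by
      rw [hB0]
      ext j
      simp [Fin.ext_iff]
    rw [hB0', hB1, hB2]
    simp only [Finset.sum_filter, ← Finset.sum_add_distrib]
    refine Finset.sum_congr rfl fun j _ => ?_
    rcases Nat.mod_two_eq_zero_or_one j with h | h <;>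
      rcases Nat.lt_or_ge (j : ℕ) 2 with h2 | h2 <;> grind
  have htotal (i : Fin 3) := sum_le_mul_MMS 3 m (c i)
  have hperm (i : Fin 3) :
      ∑ j ∈ B (π 0), c i j + ∑ j ∈ B (π 1), c i j + ∑ j ∈ B (π 2), c i j = ∑ j, c i j := by
    have h := Equiv.sum_comp π (fun k => ∑ j ∈ B k, c i j)
    simp only [Fin.sum_univ_three] at h
    rw [h, hsum]
  have hnonneg (i k : Fin 3) : 0 ≤ ∑ j ∈ B k, c i j := Finset.sum_nonneg fun j _ => hc i j
  have hdivider (k : Fin 3) : ∑ j ∈ B k, c 0 j ≤ (3 / 2 : ℝ) * MMS 3 m (c 0) := by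
    have hT := htotal 0
    have h0 := le_MMS (n := 3) (hc 0) ⟨0, hm⟩
    have h0' := hc 0 ⟨0, hm⟩
    push_cast at hT
    fin_cases k <;> simp only [Fin.zero_eta, Fin.mk_one, Fin.reduceFinMk]
    · rw [hB0, Finset.sum_singleton]
      linarith
    · have := two_mul_sum_le_sum_of_alternating (hc 0) hsorted (B 1) (by
        intro j hj j' hj'
        simp only [hB1, Finset.mem_filter, Finset.mem_univ, true_and] at hj hj'
        omega) (by
        intro j hj
        simp only [hB1, Finset.mem_filter, Finset.mem_univ, true_and] at hj
        omega)
      linarith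
    · have := two_mul_sum_le_sum_of_alternating (hc 0) hsorted (B 2) (by
        intro j hj j' hj'
        simp only [hB2, Finset.mem_filter, Finset.mem_univ, true_and] at hj hj'
        omega) (by
        intro j hj
        simp only [hB2, Finset.mem_filter, Finset.mem_univ, true_and] at hj
        omega)
      linarith
  intro i
  fin_cases i <;> simp only [Fin.zero_eta, Fin.mk_one, Fin.reduceFinMk]
  · exact hdivider _
  · have hT := htotal 1
    push_cast at hT
    linarith [hperm 1, hchoose1 (π 0), hchoose1 (π 2), hnonneg 1 (π 1)]
  · have hT := htotal 2
    push_cast at hT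
    linarith [hperm 2, hchoose2 (π 0) (by simp), hnonneg 2 (π 1)]
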